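/- A λ-term M is solvable if and only if M is head-normalizable. -/

import Mathlib

/-! Ordinary λ-terms, in de Bruijn notation. -/
inductive Lam : Type
  | var : ℕ → Lam
  | lam : Lam → Lam
  | app : Lam → Lam → Lam
  deriving DecidableEq

namespace Lam

/-- Shift the free indices `≥ d` up by one. -/
def lift (d : ℕ) : Lam → Lam
  | var n => if n < d then var n else var (n + 1)
  | lam M => lam (lift (d + 1) M)
  | app P Q => app (lift d P) (lift d Q)

/-- Capture-avoiding substitution of `N` for the free variable `k`. -/
def subst : Lam → ℕ → Lam → Lam
  | var n, k, N => if n = k then N else if k < n then var (n - 1) else var n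
  | lam M, k, N => lam (subst M (k + 1) (lift 0 N))
  | app P Q, k, N => app (subst P k N) (subst Q k N)

/-- Number of free occurrences of the variable `k`. -/
def count (k : ℕ) : Lam → ℕ
  | var n => if n = k then 1 else 0
  | lam M => count (k + 1) M
  | app P Q => count k P + count k Q

/-- One-step β-reduction. -/
inductive Beta : Lam → Lam → Prop
  | beta (M N : Lam) : Beta (app (lam M) N) (subst M 0 N)
  | lam {M M'} : Beta M M' → Beta (lam M) (lam M')
  | appL {P P' Q} : Beta P P' → Beta (app P Q) (app P' Q)
  | appR {P Q Q'} : Beta Q Q' → Beta (app P Q) (app P Q')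

/-- The head of the application spine is a variable, with no λ on the spine. -/
def neutral : Lam → Bool
  | var _ => true
  | lam _ => false
  | app P _ => neutral P

/-- Head-normal forms: `λx₁…λxₘ. x N₁ … Nₙ`. -/
def isHNF : Lam → Prop
  | var _ => True
  | lam M => isHNF M
  | app P _ => neutral P = true

/-- The head-reduction function `H`: contracts the head redex, identity on head-normal
forms. -/
def H : Lam → Lam
  | var n => var n
  | lam M => lam (H M)
  | app (lam P) Q => subst P 0 Q
  | app (var n) Q => app (var n) Q
  | app (app P₁ P₂) Q => app (H (app P₁ P₂)) Q

/-- The left-parallel reduction function `L`: identity on β-normal forms, propagated to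
the arguments on head-normal forms, contraction of the head redex otherwise. -/
def L : Lam → Lam
  | var n => var n
  | lam M => lam (L M)
  | app (lam P) Q => subst P 0 Q
  | app (var n) Q => app (var n) (L Q)
  | app (app P₁ P₂) Q =>
      if neutral (app P₁ P₂) then app (L (app P₁ P₂)) (L Q)
      else app (L (app P₁ P₂)) Q

/-- Iterated application `M N₁ … Nₙ`. -/
def mkApps (M : Lam) (Ns : List Lam) : Lam := Ns.foldl app M

/-- All free variables are `< d`. -/
def ClosedAt (d : ℕ) : Lam → Prop
  | var n => n < d
  | lam M => ClosedAt (d + 1) M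
  | app P Q => ClosedAt d P ∧ ClosedAt d Q

/-- `M` is head-normalizable: it β-reduces in finitely many steps to a head-normal form. -/
def HeadNormalizable (M : Lam) : Prop :=
  ∃ N, Relation.ReflTransGen Beta M N ∧ isHNF N

/-- `M` is a β-normal form: it contains no β-redex, i.e. admits no β-step. -/
def BetaNF (M : Lam) : Prop := ¬∃ N, Beta M N

/-- `M` is β-normalizable: it β-reduces in finitely many steps to a β-normal form. -/
def BetaNormalizable (M : Lam) : Prop :=
  ∃ N, Relation.ReflTransGen Beta M N ∧ BetaNF N

/-- `M` is strongly β-normalizable: no infinite β-reduction sequence starts from `M`. -/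
def StronglyNormalizable (M : Lam) : Prop := Acc (fun N M' => Beta M' N) M

end Lam

/-! Rigid resource terms (the nonzero ones), in de Bruijn notation:
`a ::= x | λx.a | ⟨c⟩d⃗` with `d⃗` a list of rigid terms.
The term `0` is represented by `none : Option Rig`. -/
inductive Rig : Type
  | var : ℕ → Rig
  | lam : Rig → Rig
  | app : Rig → List Rig → Rig

namespace Rig

mutual
/-- Number of free occurrences of the variable `k` in a rigid term. -/
def countR (k : ℕ) : Rig → ℕ
  | var n => if n = k then 1 else 0
  | lam a => countR (k + 1) a
  | app c ds => countR k c + countRList k ds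
termination_by a => sizeOf a

def countRList (k : ℕ) : List Rig → ℕ
  | [] => 0
  | d :: ds => countR k d + countRList k ds
termination_by ds => sizeOf ds
end

mutual
/-- Shift the free indices `≥ d` up by one. -/
def liftR (d : ℕ) : Rig → Rig
  | var n => if n < d then var n else var (n + 1)
  | lam a => lam (liftR (d + 1) a)
  | app c ds => app (liftR d c) (liftRList d ds)
termination_by a => sizeOf a

def liftRList (d : ℕ) : List Rig → List Rig
  | [] => []
  | a :: as => liftR d a :: liftRList d as
termination_by as => sizeOf as
end

mutual
/-- Rigid substitution `a[b⃗/k]`: the list `b⃗` is distributed, in order, over the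
free occurrences of the variable `k`; the result is `none` (i.e. `0`) when
`|b⃗| ≠ n_k(a)`. -/
def rsubst (k : ℕ) : Rig → List Rig → Option Rig
  | var n, bs =>
      if n = k then (match bs with | [b] => some b | _ => none)
      else (match bs with
            | [] => some (if k < n then var (n - 1) else var n)
            | _ => none)
  | lam a, bs => (rsubst (k + 1) a (liftRList 0 bs)).map lam
  | app c ds, bs =>
      match rsubst k c (bs.take (countR k c)), rsubstList k ds (bs.drop (countR k c)) with
      | some c', some ds' => some (app c' ds')
      | _, _ => none
termination_by a _ => sizeOf a

def rsubstList (k : ℕ) : List Rig → List Rig → Option (List Rig)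
  | [], bs => if bs.isEmpty then some [] else none
  | d :: ds, bs =>
      match rsubst k d (bs.take (countR k d)), rsubstList k ds (bs.drop (countR k d)) with
      | some d', some ds' => some (d' :: ds')
      | _, _ => none
termination_by ds _ => sizeOf ds
end

/-- One-step rigid resource reduction `→_r` (contextual closure of
`⟨λx.a⟩b⃗ →_r a[b⃗/x]`); the result may be `0` (i.e. `none`), which annihilates
the surrounding context. -/
inductive RStep : Rig → Option Rig → Prop
  | beta (a : Rig) (bs : List Rig) : RStep (app (lam a) bs) (rsubst 0 a bs)
  | lam {a r} : RStep a r → RStep (lam a) (r.map lam)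
  | head {c r} (ds : List Rig) : RStep c r → RStep (app c ds) (r.map (fun c' => app c' ds))
  | arg {d r} (c : Rig) (ds₁ ds₂ : List Rig) :
      RStep d r → RStep (app c (ds₁ ++ d :: ds₂)) (r.map (fun d' => app c (ds₁ ++ d' :: ds₂)))

/-- `→_r` on rigid terms extended with `0`; `0` is inert. -/
inductive RStepO : Option Rig → Option Rig → Prop
  | mk {a r} : RStep a r → RStepO (some a) r

/-- `r` is a `→_r`-normal form (`0` is one). -/
def RNormal (r : Option Rig) : Prop := ¬∃ r', RStepO r r'

/-- The head of the application spine is a variable, with no λ on the spine. -/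
def rNeutral : Rig → Bool
  | var _ => true
  | lam _ => false
  | app c _ => rNeutral c

/-- Rigid head-normal forms among nonzero terms: `λx₁…λxₘ.⟨…⟨x⟩d⃗₁…⟩d⃗ₙ`
(the term `0` is a head-normal form, but it is treated separately). -/
def rIsHNF : Rig → Prop
  | var _ => True
  | lam a => rIsHNF a
  | app c _ => rNeutral c = true

/-- The rigid head-reduction function `H_r`: contracts the head redex, identity on
head-normal forms; the result may be `0` (i.e. `none`). -/
def Hr : Rig → Option Rig
  | var n => some (var n)
  | lam a => (Hr a).map lam
  | app (lam a) bs => rsubst 0 a bs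
  | app (var n) ds => some (app (var n) ds)
  | app (app c₁ c₂) ds => (Hr (app c₁ c₂)).map (fun c' => app c' ds)

/-- `H_r` extended to terms-or-`0`. -/
def HrO : Option Rig → Option Rig := fun r => r.bind Hr

mutual
/-- The rigid left-parallel reduction function `L_r`: identity on `→_r`-normal forms,
applied componentwise to the argument lists on head-normal forms, contraction of the
head redex otherwise; the result may be `0` (i.e. `none`). -/
def Lr : Rig → Option Rig
  | var n => some (var n)
  | lam a => (Lr a).map lam
  | app (lam a) bs => rsubst 0 a bs
  | app (var n) ds => (LrList ds).map (fun ds' => app (var n) ds')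
  | app (app c₁ c₂) ds =>
      if rNeutral (app c₁ c₂) then
        match Lr (app c₁ c₂), LrList ds with
        | some c', some ds' => some (app c' ds')
        | _, _ => none
      else (Lr (app c₁ c₂)).map (fun c' => app c' ds)
termination_by a => sizeOf a

def LrList : List Rig → Option (List Rig)
  | [] => some []
  | d :: ds =>
      match Lr d, LrList ds with
      | some d', some ds' => some (d' :: ds')
      | _, _ => none
termination_by ds => sizeOf ds
end

/-- `L_r` extended to terms-or-`0`. -/
def LrO : Option Rig → Option Rig := fun r => r.bind Lr

/-- Positive resource terms: no empty list/multiset occurs as the argument of an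
application. -/
inductive rPositive : Rig → Prop
  | var (n : ℕ) : rPositive (var n)
  | lam {a} : rPositive a → rPositive (lam a)
  | app {c : Rig} {ds : List Rig} :
      rPositive c → ds ≠ [] → (∀ d ∈ ds, rPositive d) → rPositive (app c ds)

end Rig

/-- The rigid expansion `T_r(M)` of a λ-term (equivalently, the support of its Taylor
expansion, with multisets presented by lists: `Texp M` is closed under permutation of
argument lists). -/
def Texp : Lam → Set Rig
  | Lam.var n => {Rig.var n}
  | Lam.lam M => {a | ∃ b ∈ Texp M, a = Rig.lam b}
  | Lam.app P Q => {a | ∃ c ∈ Texp P, ∃ ds : List Rig, (∀ d ∈ ds, d ∈ Texp Q) ∧ a = Rig.app c ds}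

namespace Rig

/-- The support of the `n`-linear substitution `∂_k a · b̄`, where the multiset `b̄` is
presented by the list `bs`: the finite formal sum (multiset) of all nonzero results of
rigid substitutions along bijective assignments, i.e. permutations of `bs`. -/
def permSubst (k : ℕ) (a : Rig) (bs : List Rig) : Multiset Rig :=
  ↑(bs.permutations.filterMap (fun bs' => rsubst k a bs'))

/-- One step of non-erasing ε-resource reduction `→^{¬e}_{∂ε}` out of a single resource
term, producing a finite formal sum (a multiset) of resource terms: non-erasing resource
β-steps `⟨λx.a⟩b̄ → ∂_x a · b̄` (with `x ∈ FV(a)`) and resource σ₁-steps, under any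
context. -/
inductive NEStep : Rig → Multiset Rig → Prop
  | beta {a : Rig} (bs : List Rig) :
      0 < countR 0 a → NEStep (app (lam a) bs) (permSubst 0 a bs)
  | sigma (a : Rig) (ts qs : List Rig) :
      NEStep (app (app (lam a) ts) qs) {app (lam (app a (liftRList 0 qs))) ts}
  | lam {a σ} : NEStep a σ → NEStep (lam a) (σ.map lam)
  | head {c σ} (ds : List Rig) : NEStep c σ → NEStep (app c ds) (σ.map (fun c' => app c' ds))
  | arg {d σ} (c : Rig) (ds₁ ds₂ : List Rig) :
      NEStep d σ → NEStep (app c (ds₁ ++ d :: ds₂)) (σ.map (fun d' => app c (ds₁ ++ d' :: ds₂)))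

/-- Non-erasing ε-resource reduction on finite formal sums, extended by linearity. -/
def NEStepSum (σ τ : Multiset Rig) : Prop :=
  ∃ (a : Rig) (ρ υ : Multiset Rig), σ = a ::ₘ ρ ∧ NEStep a υ ∧ τ = υ + ρ

/-- `σ` is a `→^{¬e}_{∂ε}`-normal form. -/
def NENormal (σ : Multiset Rig) : Prop := ¬∃ τ, NEStepSum σ τ

end Rig

/-- One step of non-erasing ε-reduction on λ-terms: non-erasing β-steps
`(λx.M)N → M[N/x]` (with `x ∈ FV(M)`) together with σ₁-steps
`((λx.M)N)P → (λx.MP)N` (`x ∉ FV(P)`), under any context. -/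
inductive NEeps : Lam → Lam → Prop
  | beta {M : Lam} (N : Lam) :
      0 < Lam.count 0 M → NEeps (Lam.app (Lam.lam M) N) (Lam.subst M 0 N)
  | sigma (M N P : Lam) :
      NEeps (Lam.app (Lam.app (Lam.lam M) N) P)
        (Lam.app (Lam.lam (Lam.app M (Lam.lift 0 P))) N)
  | lam {M M'} : NEeps M M' → NEeps (Lam.lam M) (Lam.lam M')
  | appL {P P' Q} : NEeps P P' → NEeps (Lam.app P Q) (Lam.app P' Q)
  | appR {P Q Q'} : NEeps Q Q' → NEeps (Lam.app P Q) (Lam.app P Q')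

/-- The set `S` of λ-terms. -/
inductive SLam : Lam → Prop
  | varApp (n : ℕ) (Ms : List Lam) :
      (∀ M ∈ Ms, SLam M) → SLam (Lam.mkApps (Lam.var n) Ms)
  | lam {M} : SLam M → SLam (Lam.lam M)
  | redex (M₀ M₁ : Lam) (Ms : List Lam) :
      SLam M₁ → SLam (Lam.mkApps (Lam.subst M₀ 0 M₁) Ms) →
      SLam (Lam.mkApps (Lam.app (Lam.lam M₀) M₁) Ms)

/-- λI-terms: every abstraction binds a variable occurring free in its body. -/
def LamI : Lam → Prop
  | Lam.var _ => True
  | Lam.lam M => LamI M ∧ 0 < Lam.count 0 M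
  | Lam.app P Q => LamI P ∧ LamI Q

/-- The identity λ-term `λx.x`. -/
def Lam.Ident : Lam := Lam.lam (Lam.var 0)

/-- A closed λ-term `M` is solvable if `M N₁ ⋯ Nₙ =_β λx.x` for some `N₁, …, Nₙ`. -/
def Lam.SolvableClosed (M : Lam) : Prop :=
  ∃ Ns : List Lam, Relation.EqvGen Lam.Beta (Lam.mkApps M Ns) Lam.Ident

/-- A λ-term `M` is solvable if some closure of `M` (obtained by abstracting its free
variables) is solvable. -/
def Lam.Solvable (M : Lam) : Prop :=
  ∃ k : ℕ, Lam.ClosedAt 0 (Lam.lam^[k] M) ∧ Lam.SolvableClosed (Lam.lam^[k] M)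

namespace HeadProof

open Lam Relation

/-- Lifting a renaming under a binder. -/
def up (f : ℕ → ℕ) : ℕ → ℕ
  | 0 => 0
  | n + 1 => f n + 1

/-- Renaming. -/
def ren (f : ℕ → ℕ) : Lam → Lam
  | var n => var (f n)
  | lam M => lam (ren (up f) M)
  | app P Q => app (ren f P) (ren f Q)

/-- Lifting a parallel substitution under a binder. -/
def ups (s : ℕ → Lam) : ℕ → Lam
  | 0 => var 0
  | n + 1 => ren Nat.succ (s n)

/-- Parallel substitution. -/
def psub (s : ℕ → Lam) : Lam → Lam
  | var n => s n
  | lam M => lam (psub (ups s) M)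
  | app P Q => app (psub s P) (psub s Q)

/-- Extending an environment. -/
def push {α : Type*} (x : α) (r : ℕ → α) : ℕ → α
  | 0 => x
  | n + 1 => r n

theorem ren_ren (M : Lam) : ∀ f g, ren f (ren g M) = ren (fun n => f (g n)) M := by
  induction M with
  | var n => intros; rfl
  | lam M ih =>
    intro f g
    simp only [ren, ih]
    congr 2
    funext n; cases n <;> rfl
  | app P Q ihP ihQ => intro f g; simp only [ren, ihP, ihQ]

theorem psub_ren (M : Lam) : ∀ s g, psub s (ren g M) = psub (fun n => s (g n)) M := by
  induction M with
  | var n => intros; rfl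
  | lam M ih =>
    intro f g
    simp only [ren, psub, ih]
    congr 2
    funext n; cases n <;> rfl
  | app P Q ihP ihQ => intro f g; simp only [ren, psub, ihP, ihQ]

theorem ren_psub (M : Lam) : ∀ f s, ren f (psub s M) = psub (fun n => ren f (s n)) M := by
  induction M with
  | var n => intros; rfl
  | lam M ih =>
    intro f g
    simp only [ren, psub, ih]
    congr 2
    funext n
    cases n with
    | zero => rfl
    | succ n => simp only [ups, ren_ren]; rfl
  | app P Q ihP ihQ => intro f g; simp only [ren, psub, ihP, ihQ]

theorem psub_psub (M : Lam) : ∀ s t, psub s (psub t M) = psub (fun n => psub s (t n)) M := by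
  induction M with
  | var n => intros; rfl
  | lam M ih =>
    intro f g
    simp only [psub, ih]
    congr 2
    funext n
    cases n with
    | zero => rfl
    | succ n => simp only [ups, ren_psub, psub_ren]
  | app P Q ihP ihQ => intro f g; simp only [psub, ihP, ihQ]

theorem ups_var : ups var = var := by
  funext n; cases n <;> rfl

theorem psub_var (M : Lam) : psub var M = M := by
  induction M with
  | var n => rfl
  | lam M ih => simp only [psub, ups_var, ih]
  | app P Q ihP ihQ => simp only [psub, ihP, ihQ]

theorem ren_eq_psub (M : Lam) : ∀ f, ren f M = psub (fun n => var (f n)) M := by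
  intro f
  conv_lhs => rw [← psub_var M]
  rw [ren_psub]; rfl

theorem lift_eq (M : Lam) : ∀ d, lift d M = ren (fun n => if n < d then n else n + 1) M := by
  induction M with
  | var n => intro d; simp only [lift, ren]; split <;> rfl
  | lam M ih =>
    intro d
    simp only [lift, ren, ih]
    congr 2
    funext n
    cases n with
    | zero => simp [up]
    | succ n => simp only [up]; split <;> split <;> omega
  | app P Q ihP ihQ => intro d; simp only [lift, ren, ihP, ihQ]

theorem subst_eq (M : Lam) : ∀ k N, subst M k N =
    psub (fun n => if n = k then N else if k < n then var (n - 1) else var n) M := by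
  induction M with
  | var n => intros; rfl
  | lam M ih =>
    intro k N
    simp only [subst, psub, ih, lift_eq]
    congr 2
    funext n
    cases n with
    | zero => simp [ups]
    | succ n =>
      simp only [ups, Nat.not_lt_zero, if_false, Nat.add_right_cancel_iff, Nat.add_lt_add_iff_right]
      split
      · rfl
      · split
        · simp only [ren]; congr 1; simp only [Nat.succ_eq_add_one]; omega
        · rfl
  | app P Q ihP ihQ => intros; simp only [subst, psub, ihP, ihQ]

theorem subst_zero (M N : Lam) : subst M 0 N = psub (push N var) M := by
  rw [subst_eq]
  congr 1
  funext n
  cases n <;> simp [push]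

theorem ren_subst (f : ℕ → ℕ) (M N : Lam) :
    ren f (subst M 0 N) = subst (ren (up f) M) 0 (ren f N) := by
  rw [subst_zero, subst_zero, ren_psub, psub_ren]
  congr 1
  funext n
  cases n <;> rfl

theorem beta_ren (P : Lam) : ∀ f Q, Beta (ren f P) Q → ∃ P', Beta P P' ∧ Q = ren f P' := by
  induction P with
  | var n => intro f Q h; simp only [ren] at h; cases h
  | lam M ih =>
    intro f Q h
    simp only [ren] at h
    cases h with
    | lam h =>
      obtain ⟨P', h1, rfl⟩ := ih _ _ h
      exact ⟨_, Beta.lam h1, rfl⟩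
  | app P N ihP ihN =>
    intro f Q h
    generalize hZ : ren f (app P N) = Z at h
    cases h with
    | beta A B =>
      simp only [ren, app.injEq] at hZ
      obtain ⟨h1, rfl⟩ := hZ
      cases P with
      | var n => simp [ren] at h1
      | app _ _ => simp [ren] at h1
      | lam P0 =>
        simp only [ren, lam.injEq] at h1
        subst h1
        exact ⟨_, Beta.beta _ _, (ren_subst _ _ _).symm⟩
    | lam h => simp [ren] at hZ
    | appL h =>
      simp only [ren, app.injEq] at hZ
      obtain ⟨rfl, rfl⟩ := hZ
      obtain ⟨P', h1, rfl⟩ := ihP _ _ h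
      exact ⟨_, Beta.appL h1, rfl⟩
    | appR h =>
      simp only [ren, app.injEq] at hZ
      obtain ⟨rfl, rfl⟩ := hZ
      obtain ⟨P', h1, rfl⟩ := ihN _ _ h
      exact ⟨_, Beta.appR h1, rfl⟩

theorem neutral_ren (P : Lam) : ∀ f, neutral (ren f P) = neutral P := by
  induction P with
  | var n => intros; rfl
  | lam M ih => intros; rfl
  | app P N ihP ihN => intro f; simp only [ren, neutral, ihP]

theorem isHNF_ren (P : Lam) : ∀ f, isHNF (ren f P) → isHNF P := by
  induction P with
  | var n => intros; trivial
  | lam M ih => intro f h; exact ih _ h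
  | app P N ihP ihN => intro f h; simpa only [ren, isHNF, neutral_ren] using h

theorem isHNF_of_neutral {P : Lam} (h : neutral P = true) : isHNF P := by
  cases P with
  | var n => trivial
  | lam M => simp [neutral] at h
  | app P N => exact h

theorem hn_expand {M M' : Lam} (h : Beta M M') (h' : HeadNormalizable M') :
    HeadNormalizable M := by
  obtain ⟨N, h1, h2⟩ := h'
  exact ⟨N, ReflTransGen.head h h1, h2⟩

theorem hn_ren {f : ℕ → ℕ} {P : Lam} (h : HeadNormalizable (ren f P)) : HeadNormalizable P := by
  obtain ⟨Q, h1, h2⟩ := h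
  generalize hZ : ren f P = Z at h1
  induction h1 using ReflTransGen.head_induction_on generalizing P with
  | refl => subst hZ; exact ⟨P, .refl, isHNF_ren _ _ h2⟩
  | head h _ ih =>
    subst hZ
    obtain ⟨P', hp, rfl⟩ := beta_ren _ _ _ h
    exact hn_expand hp (ih rfl)

theorem red_lam {M N : Lam} (h : ReflTransGen Beta M N) : ReflTransGen Beta (lam M) (lam N) :=
  ReflTransGen.lift lam (fun _ _ h => Beta.lam h) _ _ h

theorem hn_lam {M : Lam} (h : HeadNormalizable M) : HeadNormalizable (lam M) := by
  obtain ⟨Q, h1, h2⟩ := h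
  exact ⟨lam Q, red_lam h1, h2⟩

theorem hn_app_var {M : Lam} {x : ℕ} (h : HeadNormalizable (app M (var x))) :
    HeadNormalizable M := by
  obtain ⟨Q, h1, h2⟩ := h
  generalize hZ : app M (var x) = Z at h1
  induction h1 using ReflTransGen.head_induction_on generalizing M with
  | refl => subst hZ; exact ⟨M, .refl, isHNF_of_neutral h2⟩
  | head h h' ih =>
    subst hZ
    cases h with
    | beta A B =>
      apply hn_lam
      apply hn_ren (f := push x id)
      refine ⟨Q, ?_, h2⟩
      have : ren (push x id) A = subst A 0 (var x) := by
        rw [subst_zero, ren_eq_psub]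
        congr 1
        funext n; cases n <;> rfl
      rw [this]; exact h'
    | appL h => exact hn_expand h (ih rfl)
    | appR h => cases h

/-! ### Graph model -/

/-- Elements of the graph model (intersection types). -/
inductive Ty : Type
  | o : Ty
  | arr : List Ty → Ty → Ty

/-- Interpretation in the graph model. -/
def den : Lam → (ℕ → Set Ty) → Set Ty
  | var n, r => r n
  | lam M, r => {A | ∃ S B, A = Ty.arr S B ∧ B ∈ den M (push {C | C ∈ S} r)}
  | app P Q, r => {A | ∃ S, Ty.arr S A ∈ den P r ∧ ∀ B ∈ S, B ∈ den Q r}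

theorem den_ren (M : Lam) : ∀ f r, den (ren f M) r = den M (fun n => r (f n)) := by
  induction M with
  | var n => intros; rfl
  | lam M ih =>
    intro f r
    have : ∀ X : Set Ty, (fun n => push X r (up f n)) = push X (fun n => r (f n)) := by
      intro X; funext n; cases n <;> rfl
    simp only [ren, den, ih, this]
  | app P Q ihP ihQ => intro f r; simp only [ren, den, ihP, ihQ]

theorem den_psub (M : Lam) : ∀ s r, den (psub s M) r = den M (fun n => den (s n) r) := by
  induction M with
  | var n => intros; rfl
  | lam M ih =>
    intro s r
    have : ∀ X : Set Ty, (fun n => den (ups s n) (push X r)) = push X (fun n => den (s n) r) := by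
      intro X; funext n
      cases n with
      | zero => rfl
      | succ n => simp only [ups, den_ren]; rfl
    simp only [psub, den, ih, this]
  | app P Q ihP ihQ => intro f r; simp only [psub, den, ihP, ihQ]

theorem push_mono {X Y : Set Ty} {r r' : ℕ → Set Ty} (h : X ⊆ Y) (hr : ∀ n, r n ⊆ r' n) :
    ∀ n, push X r n ⊆ push Y r' n := by
  intro n; cases n with
  | zero => exact h
  | succ n => exact hr n

theorem den_mono (M : Lam) : ∀ r r' : ℕ → Set Ty, (∀ n, r n ⊆ r' n) → den M r ⊆ den M r' := by
  induction M with
  | var n => intro r r' h; exact h n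
  | lam M ih =>
    rintro r r' h A ⟨S, B, rfl, hB⟩
    exact ⟨S, B, rfl, ih _ _ (push_mono subset_rfl h) hB⟩
  | app P Q ihP ihQ =>
    rintro r r' h A ⟨S, hS, hQ⟩
    exact ⟨S, ihP _ _ h hS, fun B hB => ihQ _ _ h (hQ B hB)⟩

theorem den_cont (M : Lam) : ∀ (r : ℕ → Set Ty) (A : Ty), A ∈ den M r →
    ∃ S : ℕ → List Ty, (∀ n, ∀ B ∈ S n, B ∈ r n) ∧ A ∈ den M (fun n => {B | B ∈ S n}) := by
  induction M with
  | var n =>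
    intro r A h
    refine ⟨fun m => if m = n then [A] else [], ?_, ?_⟩
    · intro m B hB
      dsimp only at hB
      split at hB
      · rename_i hm
        subst hm
        simp only [List.mem_singleton] at hB
        subst hB; exact h
      · simp at hB
    · simp [den]
  | lam M ih =>
    rintro r A ⟨T, B, rfl, hB⟩
    obtain ⟨S, h1, h2⟩ := ih _ _ hB
    refine ⟨fun n => S (n + 1), fun n => h1 (n + 1), T, B, rfl, den_mono M _ _ ?_ h2⟩
    intro n
    cases n with
    | zero => exact h1 0
    | succ n => exact subset_rfl
  | app P Q ihP ihQ =>
    rintro r A ⟨T, hT, hQ⟩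
    obtain ⟨S, h1, h2⟩ := ihP _ _ hT
    have key : ∀ T : List Ty, (∀ B ∈ T, B ∈ den Q r) →
        ∃ S : ℕ → List Ty, (∀ n, ∀ B ∈ S n, B ∈ r n) ∧
          ∀ B ∈ T, B ∈ den Q (fun n => {B | B ∈ S n}) := by
      intro T
      induction T with
      | nil => intro _; exact ⟨fun _ => [], by simp, by simp⟩
      | cons C T ih =>
        intro h
        obtain ⟨S1, a1, a2⟩ := ih (fun B hB => h B (List.mem_cons_of_mem _ hB))
        obtain ⟨S2, b1, b2⟩ := ihQ _ _ (h C List.mem_cons_self)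
        refine ⟨fun n => S1 n ++ S2 n, ?_, ?_⟩
        · intro n B hB
          rcases List.mem_append.1 hB with hB | hB
          · exact a1 n B hB
          · exact b1 n B hB
        · intro B hB
          rcases List.mem_cons.1 hB with rfl | hB
          · exact den_mono Q _ _ (fun n x hx => List.mem_append_right _ hx) b2
          · exact den_mono Q _ _ (fun n x hx => List.mem_append_left _ hx) (a2 B hB)
    obtain ⟨S', h1', h2'⟩ := key T hQ
    refine ⟨fun n => S n ++ S' n, ?_, T, ?_, ?_⟩
    · intro n B hB
      rcases List.mem_append.1 hB with hB | hB
      · exact h1 n B hB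
      · exact h1' n B hB
    · exact den_mono P _ _ (fun n x hx => List.mem_append_left _ hx) h2
    · intro B hB
      exact den_mono Q _ _ (fun n x hx => List.mem_append_right _ hx) (h2' B hB)

theorem den_beta {M N : Lam} (h : Beta M N) : ∀ r, den M r = den N r := by
  induction h with
  | beta M N =>
    intro r
    have e : (fun n => den (push N var n) r) = push (den N r) r := by
      funext n; cases n <;> rfl
    rw [subst_zero, den_psub, e]
    apply Set.Subset.antisymm
    · rintro A ⟨S, ⟨S', B, h, hB⟩, hN⟩
      cases h
      exact den_mono M _ _ (push_mono hN (fun _ => subset_rfl)) hB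
    · intro A hA
      obtain ⟨S, h1, h2⟩ := den_cont _ _ _ hA
      refine ⟨S 0, ⟨S 0, A, rfl, den_mono M _ _ ?_ h2⟩, h1 0⟩
      intro n
      cases n with
      | zero => exact subset_rfl
      | succ n => exact h1 (n + 1)
  | lam _ ih => intro r; simp only [den, ih]
  | appL _ ih => intro r; simp only [den, ih]
  | appR _ ih => intro r; simp only [den, ih]

theorem den_eqv {M N : Lam} (h : EqvGen Beta M N) : den M = den N := by
  induction h with
  | rel _ _ h => funext r; exact den_beta h r
  | refl => rfl
  | symm _ _ _ ih => exact ih.symm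
  | trans _ _ _ _ _ ih1 ih2 => exact ih1.trans ih2

/-- Realizability interpretation of types. -/
def Red : Ty → Lam → Prop
  | Ty.o, M => HeadNormalizable M
  | Ty.arr S A, M => ∀ N, (∀ B, (h : B ∈ S) → Red B N) → Red A (app M N)
termination_by A => sizeOf A
decreasing_by
  · have := List.sizeOf_lt_of_mem h
    simp only [Ty.arr.sizeOf_spec]; omega
  · simp only [Ty.arr.sizeOf_spec]; omega

theorem red_expand : ∀ (A : Ty) {M M' : Lam}, Beta M M' → Red A M' → Red A M
  | Ty.o, M, M', h, h' => by
    rw [Red] at *; exact hn_expand h h'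
  | Ty.arr S A, M, M', h, h' => by
    rw [Red] at *
    intro N hN
    exact red_expand A (Beta.appL h) (h' N hN)

theorem red_neutral : ∀ (A : Ty) {M : Lam}, neutral M = true → Red A M
  | Ty.o, M, h => by
    rw [Red]; exact ⟨M, .refl, isHNF_of_neutral h⟩
  | Ty.arr S A, M, h => by
    rw [Red]
    intro N hN
    exact red_neutral A (M := app M N) h

theorem red_hn : ∀ (A : Ty) {M : Lam}, Red A M → HeadNormalizable M
  | Ty.o, M, h => by
    rw [Red] at h; exact h
  | Ty.arr S A, M, h => by
    rw [Red] at h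
    exact hn_app_var (red_hn A (h (var 0) (fun B _ => red_neutral B rfl)))

theorem adequacy (M : Lam) : ∀ (r : ℕ → Set Ty) (s : ℕ → Lam) (A : Ty), A ∈ den M r →
    (∀ n, ∀ B ∈ r n, Red B (s n)) → Red A (psub s M) := by
  induction M with
  | var n => intro r s A h hs; exact hs n A h
  | lam M ih =>
    rintro r s A ⟨S, B, rfl, hB⟩ hs
    rw [Red]
    intro N hN
    refine red_expand B (Beta.beta _ _) ?_
    have e : subst (psub (ups s) M) 0 N = psub (push N s) M := by
      rw [subst_zero, psub_psub]
      congr 1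
      funext n
      cases n with
      | zero => rfl
      | succ n =>
        simp only [ups, psub_ren]
        exact psub_var _
    rw [e]
    refine ih _ _ _ hB ?_
    intro n
    cases n with
    | zero => exact hN
    | succ n => exact hs n
  | app P Q ihP ihQ =>
    rintro r s A ⟨S, hS, hQ⟩ hs
    have := ihP _ _ _ hS hs
    rw [Red] at this
    exact this _ (fun B hB => ihQ _ _ _ (hQ B hB) hs)

theorem hn_of_den {M : Lam} {r : ℕ → Set Ty} (h : (den M r).Nonempty) : HeadNormalizable M := by
  obtain ⟨A, hA⟩ := h
  have := adequacy M r var A hA (fun n B _ => red_neutral B rfl)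
  rw [psub_var] at this
  exact red_hn A this

theorem den_mkApps (Ns : List Lam) : ∀ (M : Lam) (r : ℕ → Set Ty),
    (den (mkApps M Ns) r).Nonempty → (den M r).Nonempty := by
  induction Ns with
  | nil => intro M r h; exact h
  | cons N Ns ih =>
    intro M r h
    obtain ⟨A, S, hS, _⟩ := ih (app M N) r h
    exact ⟨_, hS⟩

theorem den_lams (k : ℕ) : ∀ (M : Lam) (r : ℕ → Set Ty),
    (den (Lam.lam^[k] M) r).Nonempty → ∃ r', (den M r').Nonempty := by
  induction k with
  | zero => intro M r h; exact ⟨r, h⟩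
  | succ k ih =>
    intro M r h
    rw [Function.iterate_succ_apply] at h
    obtain ⟨r', A, S, B, rfl, hB⟩ := ih _ _ h
    exact ⟨_, _, hB⟩

theorem forward {M : Lam} (h : Lam.Solvable M) : HeadNormalizable M := by
  obtain ⟨k, _, Ns, h⟩ := h
  have e := den_eqv h
  have h1 : (den (mkApps (Lam.lam^[k] M) Ns) (fun _ => ∅)).Nonempty := by
    rw [e]
    exact ⟨Ty.arr [Ty.o] Ty.o, [Ty.o], Ty.o, rfl, by simp [den, push]⟩
  obtain ⟨r', h2⟩ := den_lams _ _ _ (den_mkApps _ _ _ h1)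
  exact hn_of_den h2

/-! ### Head-normalizable terms are solvable -/

theorem closedAt_mono (M : Lam) : ∀ d e, d ≤ e → ClosedAt d M → ClosedAt e M := by
  induction M with
  | var n => intro d e h h'; simp only [ClosedAt] at *; omega
  | lam M ih => intro d e h h'; exact ih (d + 1) (e + 1) (by omega) h'
  | app P Q ihP ihQ => intro d e h h'; exact ⟨ihP _ _ h h'.1, ihQ _ _ h h'.2⟩

theorem exists_closedAt (M : Lam) : ∃ d, ClosedAt d M := by
  induction M with
  | var n => exact ⟨n + 1, Nat.lt_succ_self n⟩
  | lam M ih =>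
    obtain ⟨d, h⟩ := ih
    exact ⟨d, closedAt_mono M d (d + 1) (by omega) h⟩
  | app P Q ihP ihQ =>
    obtain ⟨d, h⟩ := ihP
    obtain ⟨e, h'⟩ := ihQ
    exact ⟨max d e, closedAt_mono _ _ _ (le_max_left _ _) h,
      closedAt_mono _ _ _ (le_max_right _ _) h'⟩

theorem closedAt_lams (k : ℕ) : ∀ d M, ClosedAt d (Lam.lam^[k] M) ↔ ClosedAt (d + k) M := by
  induction k with
  | zero => intro d M; rfl
  | succ k ih =>
    intro d M
    rw [Function.iterate_succ_apply, ih]; rfl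

theorem closedAt_ren (M : Lam) : ∀ d e f, (∀ n, n < d → f n < e) → ClosedAt d M →
    ClosedAt e (ren f M) := by
  induction M with
  | var n => intro d e f h h'; exact h n h'
  | lam M ih =>
    intro d e f h h'
    refine ih (d + 1) (e + 1) _ ?_ h'
    intro n hn
    cases n with
    | zero => simp [up]
    | succ n => have := h n (by omega); simp only [up]; omega
  | app P Q ihP ihQ => intro d e f h h'; exact ⟨ihP _ _ _ h h'.1, ihQ _ _ _ h h'.2⟩

theorem closedAt_psub (M : Lam) : ∀ d e s, (∀ n, n < d → ClosedAt e (s n)) → ClosedAt d M →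
    ClosedAt e (psub s M) := by
  induction M with
  | var n => intro d e f h h'; exact h n h'
  | lam M ih =>
    intro d e f h h'
    refine ih (d + 1) (e + 1) _ ?_ h'
    intro n hn
    cases n with
    | zero => simp [ups, ClosedAt]
    | succ n =>
      exact closedAt_ren _ e (e + 1) _ (fun n hn => by simp only [Nat.succ_eq_add_one]; omega)
        (h n (by omega))
  | app P Q ihP ihQ => intro d e f h h'; exact ⟨ihP _ _ _ h h'.1, ihQ _ _ _ h h'.2⟩

theorem closedAt_beta {M N : Lam} (h : Beta M N) : ∀ d, ClosedAt d M → ClosedAt d N := by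
  induction h with
  | beta M N =>
    intro d h
    rw [subst_zero]
    refine closedAt_psub M (d + 1) d _ ?_ h.1
    intro n hn
    cases n with
    | zero => exact h.2
    | succ n => simp only [push, ClosedAt]; omega
  | lam _ ih => intro d h; exact ih (d + 1) h
  | appL _ ih => intro d h; exact ⟨ih d h.1, h.2⟩
  | appR _ ih => intro d h; exact ⟨h.1, ih d h.2⟩

theorem closedAt_red {M N : Lam} (h : ReflTransGen Beta M N) (d : ℕ) (hM : ClosedAt d M) :
    ClosedAt d N := by
  induction h with
  | refl => exact hM
  | tail _ h ih => exact closedAt_beta h d ih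

theorem mkApps_append (M : Lam) (Ns : List Lam) (N : Lam) :
    mkApps M (Ns ++ [N]) = app (mkApps M Ns) N := by
  simp [mkApps]

theorem neutral_spine (P : Lam) : neutral P = true → ∃ i Ns, P = mkApps (var i) Ns := by
  induction P with
  | var n => intro _; exact ⟨n, [], rfl⟩
  | lam M ih => intro h; simp [neutral] at h
  | app P N ihP ihN =>
    intro h
    obtain ⟨i, Ns, rfl⟩ := ihP h
    exact ⟨i, Ns ++ [N], (mkApps_append _ _ _).symm⟩

theorem hnf_spine (M : Lam) : isHNF M → ∃ m i Ns, M = Lam.lam^[m] (mkApps (var i) Ns) := by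
  induction M with
  | var n => intro _; exact ⟨0, n, [], rfl⟩
  | lam M ih =>
    intro h
    obtain ⟨m, i, Ns, rfl⟩ := ih h
    exact ⟨m + 1, i, Ns, (Function.iterate_succ_apply' _ _ _).symm⟩
  | app P N ihP ihN =>
    intro h
    obtain ⟨i, Ns, h⟩ := neutral_spine (app P N) h
    exact ⟨0, i, Ns, h⟩

theorem closedAt_mkApps (Ns : List Lam) : ∀ (d : ℕ) (M : Lam), ClosedAt d (mkApps M Ns) →
    ClosedAt d M := by
  induction Ns with
  | nil => intro d M h; exact h
  | cons N Ns ih => intro d M h; exact (ih d (app M N) h).1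

theorem subst_mkApps (Ns : List Lam) : ∀ (M : Lam) (k : ℕ) (N : Lam),
    subst (mkApps M Ns) k N = mkApps (subst M k N) (Ns.map (fun P => subst P k N)) := by
  induction Ns with
  | nil => intros; rfl
  | cons P Ns ih => intro M k N; exact ih (app M P) k N

theorem lift_closed (M : Lam) : ∀ d, ClosedAt d M → lift d M = M := by
  induction M with
  | var n => intro d h; simp only [ClosedAt] at h; simp only [lift]; rw [if_pos h]
  | lam M ih => intro d h; simp only [lift]; rw [ih _ h]
  | app P Q ihP ihQ => intro d h; simp only [lift]; rw [ihP _ h.1, ihQ _ h.2]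

theorem subst_closed (M : Lam) : ∀ d N, ClosedAt d M → subst M d N = M := by
  induction M with
  | var n =>
    intro d N h
    simp only [ClosedAt] at h
    simp only [subst]
    rw [if_neg (by omega), if_neg (by omega)]
  | lam M ih => intro d N h; simp only [subst]; rw [ih _ _ h]
  | app P Q ihP ihQ => intro d N h; simp only [subst]; rw [ihP _ _ h.1, ihQ _ _ h.2]

theorem subst_lams (m : ℕ) : ∀ (M T : Lam) (k : ℕ), ClosedAt 0 T →
    subst (Lam.lam^[m] M) k T = Lam.lam^[m] (subst M (k + m) T) := by
  induction m with
  | zero => intros; rfl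
  | succ m ih =>
    intro M T k hT
    rw [Function.iterate_succ_apply, ih _ _ _ hT, Function.iterate_succ_apply]
    simp only [subst]
    rw [lift_closed T 0 hT]; rfl

theorem red_mkApps (Ns : List Lam) : ∀ {M M' : Lam}, ReflTransGen Beta M M' →
    ReflTransGen Beta (mkApps M Ns) (mkApps M' Ns) := by
  induction Ns with
  | nil => intro M M' h; exact h
  | cons N Ns ih =>
    intro M M' h
    exact ih (M := app M N) (M' := app M' N)
      (ReflTransGen.lift (fun X => app X N) (fun _ _ h => Beta.appL h) _ _ h)

theorem closed_T (n : ℕ) : ClosedAt 0 (Lam.lam^[n] Ident) := by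
  rw [closedAt_lams]
  simp [Ident, ClosedAt]

theorem eat (Ns : List Lam) :
    ReflTransGen Beta (mkApps (Lam.lam^[Ns.length] Ident) Ns) Ident := by
  induction Ns with
  | nil => exact .refl
  | cons N Ns ih =>
    have h : Beta (app (Lam.lam^[Ns.length + 1] Ident) N) (Lam.lam^[Ns.length] Ident) := by
      rw [Function.iterate_succ_apply']
      have := Beta.beta (Lam.lam^[Ns.length] Ident) N
      rwa [subst_closed _ 0 _ (closed_T _)] at this
    exact (red_mkApps Ns (ReflTransGen.single h)).trans ih

theorem feed (n : ℕ) (m : ℕ) : ∀ (h : Lam) (Ns : List Lam), Ns.length = n →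
    (h = Lam.lam^[n] Ident ∨ ∃ i < m, h = var i) →
    ReflTransGen Beta (mkApps (Lam.lam^[m] (mkApps h Ns))
      (List.replicate m (Lam.lam^[n] Ident))) Ident := by
  induction m with
  | zero =>
    rintro h Ns hn (rfl | ⟨i, hi, _⟩)
    · subst hn; exact eat Ns
    · omega
  | succ m ih =>
    intro h Ns hn hh
    have hT := closed_T n
    set T := Lam.lam^[n] Ident with hTdef
    have step : Beta (app (Lam.lam^[m + 1] (mkApps h Ns)) T)
        (Lam.lam^[m] (mkApps (subst h m T) (Ns.map (fun P => subst P m T)))) := by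
      rw [Function.iterate_succ_apply']
      have := Beta.beta (Lam.lam^[m] (mkApps h Ns)) T
      rwa [subst_lams _ _ _ _ hT, Nat.zero_add, subst_mkApps] at this
    refine (red_mkApps (List.replicate m T) (ReflTransGen.single step)).trans ?_
    refine ih _ _ (by simpa using hn) ?_
    rcases hh with rfl | ⟨i, hi, rfl⟩
    · left
      exact subst_closed _ _ _ (closedAt_mono _ 0 m (by omega) hT)
    · by_cases him : i = m
      · left; simp [subst, him]
      · right
        refine ⟨i, by omega, ?_⟩
        simp only [subst]
        rw [if_neg him, if_neg (by omega)]

theorem red_lams (k : ℕ) {M N : Lam} (h : ReflTransGen Beta M N) :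
    ReflTransGen Beta (Lam.lam^[k] M) (Lam.lam^[k] N) := by
  induction k with
  | zero => exact h
  | succ k ih =>
    rw [Function.iterate_succ_apply', Function.iterate_succ_apply']
    exact red_lam ih

theorem eqv_of_red {M N : Lam} (h : ReflTransGen Beta M N) : EqvGen Beta M N := by
  induction h with
  | refl => exact EqvGen.refl _
  | tail _ h ih => exact EqvGen.trans _ _ _ ih (EqvGen.rel _ _ h)

theorem backward {M : Lam} (h : HeadNormalizable M) : Lam.Solvable M := by
  obtain ⟨N, hMN, hN⟩ := h
  obtain ⟨k, hk⟩ := exists_closedAt M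
  obtain ⟨m, i, Ns, rfl⟩ := hnf_spine N hN
  have hc := closedAt_red hMN k hk
  rw [closedAt_lams] at hc
  have hi : i < k + m := closedAt_mkApps _ _ _ hc
  refine ⟨k, (closedAt_lams k 0 M).2 (by simpa using hk),
    List.replicate (k + m) (Lam.lam^[Ns.length] Ident), eqv_of_red ?_⟩
  refine (red_mkApps _ (red_lams k hMN)).trans ?_
  rw [← Function.iterate_add_apply]
  exact feed Ns.length (k + m) (var i) Ns rfl (Or.inr ⟨i, hi, rfl⟩)

end HeadProof

/-- `M` is solvable iff `M` is head-normalizable. -/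
theorem solvable_iff_head_normalizable (M : Lam) :
    Lam.Solvable M ↔ Lam.HeadNormalizable M := by
  exact ⟨HeadProof.forward, HeadProof.backward⟩
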